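/- arXiv:1403.5341 — 5 statements merged into one kernel-verified Lean document; each statement's English description precedes it below -/
import Mathlib

section
/- I(A*; (A, Y_A)) = Σ_{a∈𝒜} ℙ(A = a) · I(A*; Y_a) = Σ_{a,a*∈𝒜} ℙ(A* = a) ℙ(A* = a*) · D( P(Y_a | A* = a*) ‖ P(Y_a) ), where in the last sum any term with ℙ(A* = a*) = 0 is interpreted as zero. -/
open MeasureTheory ProbabilityTheory Real

/-- Mutual information between two finitely-valued random variables `X` and `Z`
under the measure `μ`: the Kullback--Leibler divergence between the joint law
of `(X, Z)` and the product of the marginal laws. -/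
noncomputable def mutualInfo {Ω : Type*} [MeasurableSpace Ω] (μ : Measure Ω)
    {𝒳 𝒵 : Type*} [Fintype 𝒳] [Fintype 𝒵] (X : Ω → 𝒳) (Z : Ω → 𝒵) : ℝ :=
  ∑ x : 𝒳, ∑ z : 𝒵,
    (μ {ω | X ω = x ∧ Z ω = z}).toReal *
      Real.log ((μ {ω | X ω = x ∧ Z ω = z}).toReal /
        ((μ {ω | X ω = x}).toReal * (μ {ω | Z ω = z}).toReal))

/-- Kullback--Leibler divergence between two probability mass functions `p` and
`q` on a finite set (terms with `p y = 0` vanish). -/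
noncomputable def klFin {𝒴 : Type*} [Fintype 𝒴] (p q : 𝒴 → ℝ) : ℝ :=
  ∑ y : 𝒴, p y * Real.log (p y / q y)

/-! Both identities are the same computation: a probability factors as `p * r`, the factor `p`
cancels in the argument of the logarithm, and it comes out of the sum as a weight. In the first
identity `p = ℙ(A = a)` comes from independence, which factors both the joint law of
`(A*, (A, Y_A))` and the law of `(A, Y_A)`; in the second `p = ℙ(A* = a*)` comes from conditioning.
-/

theorem mul_mul_log_mul_div_mul (p r q : ℝ) :
    p * r * log (p * r / (p * q)) = p * (r * log (r / q)) := by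
  rcases eq_or_ne p 0 with rfl | hp
  · simp
  · rw [mul_div_mul_left r q hp, mul_assoc]

section

variable {Ω : Type*} [MeasurableSpace Ω] {μ : Measure Ω}

theorem toReal_measure_prodMk_eval_eq_mul {ι γ : Type*}
    [MeasurableSpace ι] [MeasurableSingletonClass ι]
    [MeasurableSpace γ] [MeasurableSingletonClass γ]
    {A : Ω → ι} (Z : ι → Ω → γ) {a : ι} (hindep : IndepFun A (Z a) μ) (z : γ) :
    (μ {ω | (A ω, Z (A ω) ω) = (a, z)}).toReal =
      (μ {ω | A ω = a}).toReal * (μ {ω | Z a ω = z}).toReal := by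
  have hfiber : {ω | (A ω, Z (A ω) ω) = (a, z)} = A ⁻¹' {a} ∩ Z a ⁻¹' {z} := by
    ext ω
    simp +contextual
  rw [hfiber, hindep.measure_inter_preimage_eq_mul {a} {z} (measurableSet_singleton a)
    (measurableSet_singleton z), ENNReal.toReal_mul]
  rfl

variable {𝒳 𝒵 : Type*} [Fintype 𝒳] [MeasurableSpace 𝒳] [MeasurableSingletonClass 𝒳] [Fintype 𝒵]

theorem mutualInfo_prodMk_eval_eq_sum {𝒜 : Type*} [Fintype 𝒜]
    [MeasurableSpace 𝒜] [MeasurableSingletonClass 𝒜]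
    [MeasurableSpace 𝒵] [MeasurableSingletonClass 𝒵]
    {X : Ω → 𝒳} {A : Ω → 𝒜} {Z : 𝒜 → Ω → 𝒵}
    (hindep : ∀ a, IndepFun A (fun ω => (X ω, Z a ω)) μ) :
    mutualInfo μ X (fun ω => (A ω, Z (A ω) ω)) =
      ∑ a, (μ {ω | A ω = a}).toReal * mutualInfo μ X (Z a) := by
  have hmarginal (a : 𝒜) (z : 𝒵) : (μ {ω | (A ω, Z (A ω) ω) = (a, z)}).toReal =
      (μ {ω | A ω = a}).toReal * (μ {ω | Z a ω = z}).toReal :=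
    toReal_measure_prodMk_eval_eq_mul Z ((hindep a).comp measurable_id measurable_snd) z
  have hjoint (x : 𝒳) (a : 𝒜) (z : 𝒵) :
      (μ {ω | X ω = x ∧ (A ω, Z (A ω) ω) = (a, z)}).toReal =
        (μ {ω | A ω = a}).toReal * (μ {ω | X ω = x ∧ Z a ω = z}).toReal := by
    simpa only [Prod.mk.injEq, and_left_comm] using
      toReal_measure_prodMk_eval_eq_mul (fun a ω => (X ω, Z a ω)) (hindep a) (x, z)
  simp only [mutualInfo, Fintype.sum_prod_type, Finset.mul_sum]
  rw [Finset.sum_comm]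
  refine Fintype.sum_congr _ _ fun a => Fintype.sum_congr _ _ fun x =>
    Fintype.sum_congr _ _ fun z => ?_
  rw [hjoint, hmarginal, mul_left_comm (μ {ω | X ω = x}).toReal, mul_mul_log_mul_div_mul]

theorem mutualInfo_eq_sum_mul_klFin [IsFiniteMeasure μ] {X : Ω → 𝒳} (hX : Measurable X)
    (Z : Ω → 𝒵) :
    mutualInfo μ X Z =
      ∑ x, (μ {ω | X ω = x}).toReal *
        klFin (fun z => ((μ[|{ω | X ω = x}]) {ω | Z ω = z}).toReal)
          (fun z => (μ {ω | Z ω = z}).toReal) := by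
  have hjoint (x : 𝒳) (z : 𝒵) : (μ {ω | X ω = x ∧ Z ω = z}).toReal =
      (μ {ω | X ω = x}).toReal * ((μ[|{ω | X ω = x}]) {ω | Z ω = z}).toReal := by
    have hfiber : MeasurableSet {ω | X ω = x} := hX (measurableSet_singleton x)
    rw [mul_comm, ← ENNReal.toReal_mul, cond_mul_eq_inter hfiber]
    rfl
  simp only [mutualInfo, klFin, Finset.mul_sum, hjoint, mul_mul_log_mul_div_mul]

end

theorem mutualInfo_action_observation_eq_general
    {Ω : Type*} [MeasurableSpace Ω] (μ : Measure Ω) [IsProbabilityMeasure μ]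
    {𝒳 𝒜 𝒴 : Type*} [Fintype 𝒳] [Fintype 𝒜] [Fintype 𝒴]
    [MeasurableSpace 𝒳] [MeasurableSingletonClass 𝒳]
    [MeasurableSpace 𝒜] [MeasurableSingletonClass 𝒜]
    [MeasurableSpace 𝒴] [MeasurableSingletonClass 𝒴]
    (Y : 𝒜 → Ω → 𝒴) (X : Ω → 𝒳) (A : Ω → 𝒜) (hX : Measurable X)
    (hindep : ∀ a, IndepFun A (fun ω => (X ω, Y a ω)) μ) :
    mutualInfo μ X (fun ω => (A ω, Y (A ω) ω)) =
        ∑ a, (μ {ω | A ω = a}).toReal * mutualInfo μ X (Y a) ∧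
    mutualInfo μ X (fun ω => (A ω, Y (A ω) ω)) =
        ∑ a, ∑ x, (μ {ω | A ω = a}).toReal * (μ {ω | X ω = x}).toReal *
          klFin (fun y => ((μ[|{ω | X ω = x}]) {ω | Y a ω = y}).toReal)
            (fun y => (μ {ω | Y a ω = y}).toReal) := by
  have hsum := mutualInfo_prodMk_eval_eq_sum hindep
  refine ⟨hsum, hsum.trans ?_⟩
  simp only [mutualInfo_eq_sum_mul_klFin hX, Finset.mul_sum, mul_assoc]

/-- **Proposition 2, first identity.** Under Thompson sampling (the action `A`
is independent of `(A*, Y)` and has the same distribution as the optimal action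
`A*`), the mutual information between `A*` and `(A, Y_A)` equals
`Σ_a ℙ(A = a) I(A*; Y_a)`, which in turn equals
`Σ_{a,a*} ℙ(A* = a) ℙ(A* = a*) D(P(Y_a | A* = a*) ‖ P(Y_a))`. -/
theorem mutualInfo_action_observation_eq
    {Ω : Type*} [MeasurableSpace Ω] (μ : Measure Ω) [IsProbabilityMeasure μ]
    {𝒜 𝒴 : Type*} [Fintype 𝒜] [Nonempty 𝒜] [Fintype 𝒴]
    [MeasurableSpace 𝒜] [MeasurableSingletonClass 𝒜]
    [MeasurableSpace 𝒴] [MeasurableSingletonClass 𝒴]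
    (Y : 𝒜 → Ω → 𝒴) (Astar A : Ω → 𝒜)
    (hYmeas : ∀ a, Measurable (Y a)) (hAstarMeas : Measurable Astar)
    (hAMeas : Measurable A)
    (hmatch : ∀ a : 𝒜, μ {ω | A ω = a} = μ {ω | Astar ω = a})
    (hindep : IndepFun A (fun ω => (Astar ω, fun a => Y a ω)) μ) :
    mutualInfo μ Astar (fun ω => (A ω, Y (A ω) ω)) =
        ∑ a : 𝒜, (μ {ω | A ω = a}).toReal * mutualInfo μ Astar (Y a) ∧
    mutualInfo μ Astar (fun ω => (A ω, Y (A ω) ω)) =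
        ∑ a : 𝒜, ∑ astar : 𝒜,
          (μ {ω | Astar ω = a}).toReal * (μ {ω | Astar ω = astar}).toReal *
            klFin (fun y => ((μ[|{ω | Astar ω = astar}]) {ω | Y a ω = y}).toReal)
              (fun y => (μ {ω | Y a ω = y}).toReal) := by
  have hgeneral := mutualInfo_action_observation_eq_general μ Y Astar A hAstarMeas
    fun a => hindep.comp measurable_id (measurable_fst.prodMk (measurable_snd.eval (a := a)))
  exact ⟨hgeneral.1, by simpa only [hmatch] using hgeneral.2⟩
end

section
/- E[R(Y_{A*}) − R(Y_A)] = Σ_{a∈𝒜} ℙ(A* = a) · ( E[R(Y_a) | A* = a] − E[R(Y_a)] ), where any term with ℙ(A* = a) = 0 is interpreted as zero and Y_{A*} denotes the random variable ω ↦ Y_{A*(ω)}(ω). -/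
open MeasureTheory ProbabilityTheory Real

/-!
Both expected rewards split over the fibers of the chosen action. On `{A* = a}` the contribution is
`ℙ(A* = a) E[R(Y_a) | A* = a]`. On `{A = a}`, independence of `A` and `Y_a` factors it as
`ℙ(A = a) E[R(Y_a)]`, and probability matching replaces `ℙ(A = a)` by `ℙ(A* = a)`.
-/

section Selection

variable {Ω ι : Type*} [MeasurableSpace Ω] [Countable ι] [MeasurableSpace ι]
  [MeasurableSingletonClass ι] {T : Ω → ι}

lemma measurable_apply_of_countable {β : Type*} [MeasurableSpace β] {X : ι → Ω → β}
    (hX : ∀ i, Measurable (X i)) (hT : Measurable T) : Measurable fun ω ↦ X (T ω) ω :=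
  (measurable_from_prod_countable_right (f := Function.uncurry X) hX).comp
    (hT.prodMk measurable_id)

lemma integrable_comp_apply_of_finite {β E : Type*} [Finite β] [MeasurableSpace β]
    [MeasurableSingletonClass β] [NormedAddCommGroup E] {μ : Measure Ω} [IsFiniteMeasure μ]
    {X : ι → Ω → β} (hX : ∀ i, Measurable (X i)) (hT : Measurable T) (f : β → E) :
    Integrable (fun ω ↦ f (X (T ω) ω)) μ :=
  Integrable.of_finite.comp_measurable (measurable_apply_of_countable hX hT)

lemma hasSum_setIntegral_fiber {E : Type*} [NormedAddCommGroup E] [NormedSpace ℝ E]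
    {μ : Measure Ω} {X : ι → Ω → E} (hT : Measurable T)
    (hint : Integrable (fun ω ↦ X (T ω) ω) μ) :
    HasSum (fun i ↦ ∫ ω in {ω | T ω = i}, X i ω ∂μ) (∫ ω, X (T ω) ω ∂μ) := by
  have hfiber : ∀ i, MeasurableSet {ω | T ω = i} := fun i ↦ hT (measurableSet_singleton i)
  have hcover : ⋃ i, {ω | T ω = i} = Set.univ := Set.iUnion_eq_univ_iff.2 fun ω ↦ ⟨T ω, rfl⟩
  have hsum := hasSum_integral_iUnion hfiber (pairwise_disjoint_fiber T) hint.integrableOn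
  rw [hcover, setIntegral_univ] at hsum
  refine hsum.congr_fun fun i ↦ setIntegral_congr_fun (hfiber i) fun ω (hω : T ω = i) ↦ ?_
  simp only [hω]

end Selection

lemma measureReal_smul_integral_cond {Ω E : Type*} [MeasurableSpace Ω] [NormedAddCommGroup E]
    [NormedSpace ℝ E] {μ : Measure Ω} {s : Set Ω} (hs : μ s ≠ ⊤) (f : Ω → E) :
    μ.real s • ∫ ω, f ω ∂μ[|s] = ∫ ω in s, f ω ∂μ := by
  rw [ProbabilityTheory.cond, ← setAverage_eq', measure_smul_setAverage f hs]

theorem expected_regret_eq_general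
    {Ω : Type*} [MeasurableSpace Ω] (μ : Measure Ω) [IsFiniteMeasure μ]
    {𝒜 𝒴 : Type*} [Countable 𝒜] [MeasurableSpace 𝒜] [MeasurableSingletonClass 𝒜]
    [MeasurableSpace 𝒴]
    (Y : 𝒜 → Ω → 𝒴) (Astar A : Ω → 𝒜) (R : 𝒴 → ℝ)
    (hYmeas : ∀ a, AEMeasurable (Y a) μ) (hRmeas : ∀ a, AEStronglyMeasurable R (μ.map (Y a)))
    (hAstarMeas : Measurable Astar) (hAMeas : Measurable A)
    (hAstarInt : Integrable (fun ω ↦ R (Y (Astar ω) ω)) μ)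
    (hAInt : Integrable (fun ω ↦ R (Y (A ω) ω)) μ)
    (hmatch : ∀ a : 𝒜, μ {ω | A ω = a} = μ {ω | Astar ω = a})
    (hindep : ∀ a, IndepFun A (Y a) μ) :
    HasSum (fun a ↦ (μ {ω | Astar ω = a}).toReal *
        ((∫ ω, R (Y a ω) ∂(μ[|{ω | Astar ω = a}])) - ∫ ω, R (Y a ω) ∂μ))
      (∫ ω, (R (Y (Astar ω) ω) - R (Y (A ω) ω)) ∂μ) := by
  have hoptimal (a : 𝒜) :
      (μ {ω | Astar ω = a}).toReal * ∫ ω, R (Y a ω) ∂(μ[|{ω | Astar ω = a}]) =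
        ∫ ω in {ω | Astar ω = a}, R (Y a ω) ∂μ :=
    measureReal_smul_integral_cond (measure_ne_top μ _) _
  have hselected (a : 𝒜) : (μ {ω | Astar ω = a}).toReal * ∫ ω, R (Y a ω) ∂μ =
      ∫ ω in {ω | A ω = a}, R (Y a ω) ∂μ := by
    rw [← hmatch a]
    exact (((IndepFun_iff_Indep _ _ _).1 (hindep a)).setIntegral_eq_mul hAMeas.comap_le (hYmeas a)
      ⟨{a}, measurableSet_singleton a, rfl⟩ (hRmeas a)).symm
  rw [integral_sub hAstarInt hAInt]
  simp only [mul_sub, hoptimal, hselected]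
  exact (hasSum_setIntegral_fiber hAstarMeas hAstarInt).sub (hasSum_setIntegral_fiber hAMeas hAInt)

/-- **Proposition 2, second identity** (expected-regret representation). Under
Thompson sampling (the action `A` is independent of `(A*, Y)` and has the same
distribution as the optimal action `A*`),
`E[R(Y_{A*}) − R(Y_A)] = Σ_a ℙ(A* = a) (E[R(Y_a) | A* = a] − E[R(Y_a)])`.
Terms where `ℙ(A* = a) = 0` vanish (the conditional measure is then the zero
measure, so the corresponding integral is zero, and the term is multiplied by
zero in any case). -/
theorem expected_regret_eq
    {Ω : Type*} [MeasurableSpace Ω] (μ : Measure Ω) [IsProbabilityMeasure μ]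
    {𝒜 𝒴 : Type*} [Fintype 𝒜] [Nonempty 𝒜] [Fintype 𝒴]
    [MeasurableSpace 𝒜] [MeasurableSingletonClass 𝒜]
    [MeasurableSpace 𝒴] [MeasurableSingletonClass 𝒴]
    (Y : 𝒜 → Ω → 𝒴) (Astar A : Ω → 𝒜) (R : 𝒴 → ℝ)
    (hYmeas : ∀ a, Measurable (Y a)) (hAstarMeas : Measurable Astar)
    (hAMeas : Measurable A)
    (hmatch : ∀ a : 𝒜, μ {ω | A ω = a} = μ {ω | Astar ω = a})
    (hindep : IndepFun A (fun ω => (Astar ω, fun a => Y a ω)) μ) :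
    ∫ ω, (R (Y (Astar ω) ω) - R (Y (A ω) ω)) ∂μ =
      ∑ a : 𝒜, (μ {ω | Astar ω = a}).toReal *
        ((∫ ω, R (Y a ω) ∂(μ[|{ω | Astar ω = a}])) - ∫ ω, R (Y a ω) ∂μ) := by
  exact HasSum.unique (expected_regret_eq_general μ Y Astar A R
    (fun a ↦ (hYmeas a).aemeasurable) (fun _ ↦ .of_discrete) hAstarMeas hAMeas
    (integrable_comp_apply_of_finite hYmeas hAstarMeas R)
    (integrable_comp_apply_of_finite hYmeas hAMeas R) hmatch fun a ↦
      hindep.comp measurable_id ((measurable_pi_apply a).comp measurable_snd)) (hasSum_fintype _)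
end

section
/- Assume sup_{y∈𝒴} R(y) − inf_{y∈𝒴} R(y) ≤ 1. Then ( E[R(Y_{A*}) − R(Y_A)] )² ≤ (|𝒜| / 2) · I(A*; (A, Y_A)), i.e. the information ratio of Thompson sampling is at most |𝒜|/2. -/
/-!
Let `m a` be the mean of `R(Y_a)`. Since `A` is independent of `(A*, Y)` and has the law of `A*`,
the regret is `∑ a, E[(R(Y_a) - m a) 1_{A* = a}]`, and the information is
`∑ b, ∑ a, P(A = a) P(A* = b) KL(P(Y_a | A* = b) ‖ P(Y_a))`. For sub-Gaussian rewards the Gibbs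
variational principle bounds the square of the `a`-th regret term by the diagonal term `a = b` of
the information, and the Cauchy–Schwarz inequality over the actions costs the factor `|𝒜|`; the
off-diagonal terms are nonnegative. Hoeffding's lemma gives the variance proxy `1/4` for rewards
with range of width at most one.
-/

open MeasureTheory ProbabilityTheory Real

/-- The contribution of the value `x` of `X` to the mutual information of `X` and `Z`, that is
`P(X = x)` times the Kullback--Leibler divergence of the conditional law of `Z` given `X = x` from
the law of `Z`. It is `0` when `P(X = x) = 0`,
where that conditional law is undefined. -/
noncomputable def mutualInfoAt {Ω : Type*} [MeasurableSpace Ω] (μ : Measure Ω)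
    {𝒳 𝒵 : Type*} [Fintype 𝒵] (X : Ω → 𝒳) (Z : Ω → 𝒵) (x : 𝒳) : ℝ :=
  ∑ z, μ.real {ω | X ω = x ∧ Z ω = z} *
    log (μ.real {ω | X ω = x ∧ Z ω = z} / (μ.real {ω | X ω = x} * μ.real {ω | Z ω = z}))

/-- The Fenchel–Young inequality for the convex function `f ↦ f * log (f / g) - f`. -/
lemma mul_add_sub_mul_exp_le_mul_log_div {f g : ℝ} (hf : 0 ≤ f) (hg : 0 ≤ g) (hgf : g = 0 → f = 0)
    (h : ℝ) : f * h + f - g * exp h ≤ f * log (f / g) := by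
  obtain rfl | hf := hf.eq_or_lt
  · simpa using mul_nonneg hg (exp_pos h).le
  have hg : 0 < g := hg.lt_of_ne fun hg0 ↦ hf.ne' (hgf hg0.symm)
  have hlog : log (g * exp h / f) = h - log (f / g) := by
    rw [log_div (by positivity) hf.ne', log_mul hg.ne' (exp_ne_zero h), log_exp,
      log_div hf.ne' hg.ne']
    ring
  have hle : f * (h - log (f / g)) ≤ f * (g * exp h / f - 1) :=
    mul_le_mul_of_nonneg_left (hlog ▸ log_le_sub_one_of_pos (by positivity)) hf.le
  rw [mul_sub, mul_sub, mul_div_cancel₀ _ hf.ne'] at hle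
  linarith

lemma integral_comp_eq_sum_fiber {Ω 𝒵 E : Type*} [MeasurableSpace Ω] {μ : Measure Ω}
    [IsFiniteMeasure μ] [Fintype 𝒵] [MeasurableSpace 𝒵] [MeasurableSingletonClass 𝒵]
    [NormedAddCommGroup E] [NormedSpace ℝ E] [CompleteSpace E] {Z : Ω → 𝒵} (hZ : Measurable Z)
    (φ : 𝒵 → E) :
    ∫ ω, φ (Z ω) ∂μ = ∑ z, μ.real {ω | Z ω = z} • φ z := by
  rw [← integral_map (f := φ) hZ.aemeasurable .of_discrete, integral_fintype .of_finite]
  simp only [map_measureReal_apply hZ (measurableSet_singleton _)]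
  rfl

section MutualInfo

variable {Ω 𝒳 𝒵 : Type*} [MeasurableSpace Ω] {μ : Measure Ω} [Fintype 𝒵] [MeasurableSpace 𝒵]
  [MeasurableSingletonClass 𝒵] {X : Ω → 𝒳} {Z : Ω → 𝒵}

lemma setIntegral_comp_eq_sum_fiber {E : Type*} [NormedAddCommGroup E] [NormedSpace ℝ E]
    [CompleteSpace E] [IsFiniteMeasure μ] (hZ : Measurable Z) (φ : 𝒵 → E) (s : Set Ω) :
    ∫ ω in s, φ (Z ω) ∂μ = ∑ z, μ.real {ω | ω ∈ s ∧ Z ω = z} • φ z := by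
  rw [integral_comp_eq_sum_fiber hZ]
  refine Finset.sum_congr rfl fun z _ ↦ ?_
  have hfiber : MeasurableSet {ω | Z ω = z} := hZ (measurableSet_singleton z)
  rw [measureReal_restrict_apply hfiber, Set.inter_comm]
  rfl

/-- The Gibbs (Donsker–Varadhan) variational principle, with `log ∫ exp h` linearized. -/
lemma setIntegral_add_sub_mul_integral_exp_le_mutualInfoAt [IsFiniteMeasure μ] (hZ : Measurable Z)
    (h : 𝒵 → ℝ) (x : 𝒳) :
    ∫ ω in {ω | X ω = x}, h (Z ω) ∂μ + μ.real {ω | X ω = x}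
        - μ.real {ω | X ω = x} * ∫ ω, exp (h (Z ω)) ∂μ ≤ mutualInfoAt μ X Z x := by
  have hmass : μ.real {ω | X ω = x} = ∑ z, μ.real {ω | X ω = x ∧ Z ω = z} := by
    simpa using setIntegral_comp_eq_sum_fiber (μ := μ) hZ (fun _ ↦ (1 : ℝ)) {ω | X ω = x}
  have habs (z : 𝒵) (hz : μ.real {ω | X ω = x} * μ.real {ω | Z ω = z} = 0) :
      μ.real {ω | X ω = x ∧ Z ω = z} = 0 := by
    obtain hx | hz := mul_eq_zero.mp hz
    · exact measureReal_mono_null (fun _ hω ↦ hω.1) hx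
    · exact measureReal_mono_null (fun _ hω ↦ hω.2) hz
  calc
    _ = ∑ z, (μ.real {ω | X ω = x ∧ Z ω = z} * h z + μ.real {ω | X ω = x ∧ Z ω = z}
          - μ.real {ω | X ω = x} * μ.real {ω | Z ω = z} * exp (h z)) := by
      rw [Finset.sum_sub_distrib, Finset.sum_add_distrib, ← hmass,
        setIntegral_comp_eq_sum_fiber hZ h, integral_comp_eq_sum_fiber hZ fun z ↦ exp (h z),
        Finset.mul_sum]
      simp only [smul_eq_mul, mul_assoc, Set.mem_ofPred_eq]
    _ ≤ mutualInfoAt μ X Z x :=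
      Finset.sum_le_sum fun z _ ↦ mul_add_sub_mul_exp_le_mul_log_div measureReal_nonneg
        (mul_nonneg measureReal_nonneg measureReal_nonneg) (habs z) (h z)

lemma mutualInfoAt_nonneg [IsProbabilityMeasure μ] (hZ : Measurable Z) (x : 𝒳) :
    0 ≤ mutualInfoAt μ X Z x := by
  simpa using setIntegral_add_sub_mul_integral_exp_le_mutualInfoAt (μ := μ) (X := X) hZ 0 x

lemma sq_setIntegral_le_mutualInfoAt_of_hasSubgaussianMGF [IsFiniteMeasure μ] (hZ : Measurable Z)
    {r : 𝒵 → ℝ} {c : NNReal} (hr : HasSubgaussianMGF (fun ω ↦ r (Z ω)) c μ) (x : 𝒳) :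
    (∫ ω in {ω | X ω = x}, r (Z ω) ∂μ) ^ 2 ≤
      2 * c * (μ.real {ω | X ω = x} * mutualInfoAt μ X Z x) := by
  set p := μ.real {ω | X ω = x}
  set Δ := ∫ ω in {ω | X ω = x}, r (Z ω) ∂μ
  have hquad (t : ℝ) : 0 ≤ p * c / 2 * (t * t) + -Δ * t + mutualInfoAt μ X Z x := by
    have hexp : ∫ ω, exp (t * r (Z ω) - c * t ^ 2 / 2) ∂μ ≤ 1 := by
      simp only [exp_sub, integral_div]
      exact div_le_one_of_le₀ (hr.mgf_le t) (exp_pos _).le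
    have hlin : ∫ ω in {ω | X ω = x}, (t * r (Z ω) - c * t ^ 2 / 2) ∂μ
        = t * Δ - p * (c * t ^ 2 / 2) := by
      rw [integral_sub (hr.integrable.const_mul t).integrableOn (integrable_const _),
        integral_const_mul, setIntegral_const, smul_eq_mul]
    have hgibbs := setIntegral_add_sub_mul_integral_exp_le_mutualInfoAt (μ := μ) (X := X) hZ
      (fun z ↦ t * r z - c * t ^ 2 / 2) x
    have hmul := mul_le_mul_of_nonneg_left hexp (measureReal_nonneg : 0 ≤ p)
    rw [hlin] at hgibbs
    linarith
  have hdiscrim := discrim_le_zero hquad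
  rw [discrim] at hdiscrim
  linarith

end MutualInfo

lemma measureReal_eq_and_eq_of_indepFun {Ω 𝒜 𝒵 : Type*} [MeasurableSpace Ω] {μ : Measure Ω}
    [MeasurableSpace 𝒜] [MeasurableSingletonClass 𝒜]
    [MeasurableSpace 𝒵] [MeasurableSingletonClass 𝒵] {A : Ω → 𝒜} {Z : Ω → 𝒵}
    (h : IndepFun A Z μ) (a : 𝒜) (z : 𝒵) :
    μ.real {ω | A ω = a ∧ Z ω = z} = μ.real {ω | A ω = a} * μ.real {ω | Z ω = z} := by
  simp only [measureReal_def, ← ENNReal.toReal_mul]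
  exact congrArg ENNReal.toReal <| h.measure_inter_preimage_eq_mul {a} {z}
    (measurableSet_singleton a) (measurableSet_singleton z)

lemma mutualInfoAt_apply_of_indepFun {Ω 𝒜 𝒳 𝒴 : Type*} [MeasurableSpace Ω] {μ : Measure Ω}
    [Fintype 𝒜] [MeasurableSpace 𝒜] [MeasurableSingletonClass 𝒜]
    [MeasurableSpace 𝒳] [MeasurableSingletonClass 𝒳]
    [Fintype 𝒴] [MeasurableSpace 𝒴] [MeasurableSingletonClass 𝒴]
    {A : Ω → 𝒜} {X : Ω → 𝒳} {Y : 𝒜 → Ω → 𝒴}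
    (hindep : ∀ a, IndepFun A (fun ω ↦ (X ω, Y a ω)) μ) (x : 𝒳) :
    mutualInfoAt μ X (fun ω ↦ (A ω, Y (A ω) ω)) x =
      ∑ a, μ.real {ω | A ω = a} * mutualInfoAt μ X (Y a) x := by
  have hjoint (a : 𝒜) (y : 𝒴) : μ.real {ω | X ω = x ∧ (A ω, Y (A ω) ω) = (a, y)} =
      μ.real {ω | A ω = a} * μ.real {ω | X ω = x ∧ Y a ω = y} := by
    convert measureReal_eq_and_eq_of_indepFun (hindep a) a (x, y) using 3 <;> grind
  have hmarginal (a : 𝒜) (y : 𝒴) : μ.real {ω | (A ω, Y (A ω) ω) = (a, y)} =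
      μ.real {ω | A ω = a} * μ.real {ω | Y a ω = y} := by
    have hindep_snd : IndepFun A (Y a) μ := (hindep a).comp measurable_id measurable_snd
    convert measureReal_eq_and_eq_of_indepFun hindep_snd a y using 3; grind
  simp only [mutualInfoAt, Fintype.sum_prod_type, Finset.mul_sum, hjoint, hmarginal]
  refine Finset.sum_congr rfl fun a _ ↦ Finset.sum_congr rfl fun y _ ↦ ?_
  obtain ha | ha := eq_or_ne (μ.real {ω | A ω = a}) 0
  · simp [ha]
  · rw [mul_left_comm (μ.real {ω | X ω = x}), mul_div_mul_left _ _ ha, mul_assoc]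

lemma apply_eq_sum_indicator {Ω 𝒜 E : Type*} [Fintype 𝒜] [AddCommMonoid E] (B : Ω → 𝒜)
    (φ : 𝒜 → Ω → E) (ω : Ω) : φ (B ω) ω = ∑ a, {ω | B ω = a}.indicator (φ a) ω := by
  classical simp [Set.indicator_apply]

section RandomIndex

variable {Ω 𝒜 : Type*} [MeasurableSpace Ω] {μ : Measure Ω} [MeasurableSpace 𝒜]
  [MeasurableSingletonClass 𝒜] {A B : Ω → 𝒜}

lemma integrable_apply [Finite 𝒜] {E : Type*} [NormedAddCommGroup E] (hB : Measurable B)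
    {φ : 𝒜 → Ω → E} (hφ : ∀ a, Integrable (φ a) μ) : Integrable (fun ω ↦ φ (B ω) ω) μ := by
  have := Fintype.ofFinite 𝒜
  simp only [apply_eq_sum_indicator B φ]
  exact integrable_finsetSum _ fun a _ ↦ (hφ a).indicator (hB (measurableSet_singleton a))

lemma integral_apply_eq_sum_setIntegral [Fintype 𝒜] {E : Type*} [NormedAddCommGroup E]
    [NormedSpace ℝ E] (hB : Measurable B) {φ : 𝒜 → Ω → E} (hφ : ∀ a, Integrable (φ a) μ) :
    ∫ ω, φ (B ω) ω ∂μ = ∑ a, ∫ ω in {ω | B ω = a}, φ a ω ∂μ := by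
  have hmeas (a : 𝒜) : MeasurableSet {ω | B ω = a} := hB (measurableSet_singleton a)
  simp only [apply_eq_sum_indicator B φ, ← integral_indicator (hmeas _)]
  exact integral_finsetSum _ fun a _ ↦ (hφ a).indicator (hmeas a)

lemma integral_apply_sub_apply_of_indepFun [Fintype 𝒜] [IsFiniteMeasure μ]
    (hA : Measurable A) (hB : Measurable B) (hAB : ∀ a, μ {ω | A ω = a} = μ {ω | B ω = a})
    {φ : 𝒜 → Ω → ℝ} (hφ : ∀ a, Integrable (φ a) μ) (hindep : ∀ a, IndepFun A (φ a) μ) :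
    ∫ ω, (φ (B ω) ω - φ (A ω) ω) ∂μ = ∑ a, ∫ ω in {ω | B ω = a}, (φ a ω - μ[φ a]) ∂μ := by
  have hA_eq (a : 𝒜) :
      ∫ ω in {ω | A ω = a}, φ a ω ∂μ = ∫ ω in {ω | B ω = a}, μ[φ a] ∂μ := by
    rw [setIntegral_const, smul_eq_mul, measureReal_def, ← hAB a]
    exact Indep.setIntegral_eq_mul (f := id) hA.comap_le (hindep a)
      (hφ a).aemeasurable ⟨{a}, measurableSet_singleton a, rfl⟩ aestronglyMeasurable_id
  rw [integral_sub (integrable_apply hB hφ) (integrable_apply hA hφ),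
    integral_apply_eq_sum_setIntegral hB hφ, integral_apply_eq_sum_setIntegral hA hφ,
    ← Finset.sum_sub_distrib]
  exact Finset.sum_congr rfl fun a _ ↦ by
    rw [hA_eq, integral_sub (hφ a).integrableOn (integrable_const _)]

end RandomIndex

lemma hasSubgaussianMGF_comp_sub_integral_of_iSup_sub_iInf_le {Ω 𝒴 : Type*} [MeasurableSpace Ω]
    {μ : Measure Ω} [IsProbabilityMeasure μ] [Finite 𝒴] [MeasurableSpace 𝒴]
    [MeasurableSingletonClass 𝒴] {Y : Ω → 𝒴} (hY : Measurable Y) {R : 𝒴 → ℝ} {L : ℝ}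
    (hR : (⨆ y, R y) - (⨅ y, R y) ≤ L) :
    HasSubgaussianMGF (fun ω ↦ R (Y ω) - ∫ ω', R (Y ω') ∂μ) ((‖L‖₊ / 2) ^ 2) μ := by
  have hmem (ω : Ω) : R (Y ω) ∈ Set.Icc (⨅ y, R y) ((⨅ y, R y) + L) :=
    ⟨ciInf_le (Set.finite_range R).bddBelow (Y ω),
      (le_ciSup (Set.finite_range R).bddAbove (Y ω)).trans (sub_le_iff_le_add'.mp hR)⟩
  simpa using hasSubgaussianMGF_of_mem_Icc ((measurable_of_finite R).comp hY).aemeasurable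
    (.of_forall hmem)

theorem information_ratio_le_card_div_two_general
    {Ω : Type*} [MeasurableSpace Ω] {μ : Measure Ω} [IsProbabilityMeasure μ]
    {𝒜 𝒴 : Type*} [Fintype 𝒜] [Fintype 𝒴]
    [MeasurableSpace 𝒜] [MeasurableSingletonClass 𝒜]
    [MeasurableSpace 𝒴] [MeasurableSingletonClass 𝒴]
    {Y : 𝒜 → Ω → 𝒴} {Astar A : Ω → 𝒜} {R : 𝒴 → ℝ} {c : NNReal}
    (hR : ∀ a, HasSubgaussianMGF (fun ω ↦ R (Y a ω) - ∫ ω', R (Y a ω') ∂μ) c μ)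
    (hY : ∀ a, Measurable (Y a)) (hAstar : Measurable Astar) (hA : Measurable A)
    (hmatch : ∀ a, μ {ω | A ω = a} = μ {ω | Astar ω = a})
    (hindep : ∀ a, IndepFun A (fun ω ↦ (Astar ω, Y a ω)) μ) :
    (∫ ω, (R (Y (Astar ω) ω) - R (Y (A ω) ω)) ∂μ) ^ 2 ≤
      2 * c * Fintype.card 𝒜 * mutualInfo μ Astar (fun ω ↦ (A ω, Y (A ω) ω)) := by
  let p (a : 𝒜) : ℝ := μ.real {ω | A ω = a}
  let gap (a : 𝒜) : ℝ := ∫ ω in {ω | Astar ω = a}, (R (Y a ω) - ∫ ω', R (Y a ω') ∂μ) ∂μ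
  have hregret : ∫ ω, (R (Y (Astar ω) ω) - R (Y (A ω) ω)) ∂μ = ∑ a, gap a :=
    integral_apply_sub_apply_of_indepFun (φ := fun a ω ↦ R (Y a ω)) hA hAstar hmatch
      (fun a ↦ Integrable.comp_measurable (g := R) .of_finite (hY a))
      fun a ↦ (hindep a).comp measurable_id ((measurable_of_finite R).comp measurable_snd)
  have hinfo : mutualInfo μ Astar (fun ω ↦ (A ω, Y (A ω) ω)) =
      ∑ b, ∑ a, p a * mutualInfoAt μ Astar (Y a) b :=
    Finset.sum_congr rfl fun b _ ↦ mutualInfoAt_apply_of_indepFun hindep b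
  have hgap (a : 𝒜) : gap a ^ 2 ≤ 2 * c * (p a * mutualInfoAt μ Astar (Y a) a) := by
    simpa only [p, measureReal_def, hmatch a] using
      sq_setIntegral_le_mutualInfoAt_of_hasSubgaussianMGF (hY a)
        (r := fun y ↦ R y - ∫ ω', R (Y a ω') ∂μ) (hR a) a
  have hdiag (b : 𝒜) : p b * mutualInfoAt μ Astar (Y b) b ≤
      ∑ a, p a * mutualInfoAt μ Astar (Y a) b :=
    Finset.single_le_sum (f := fun a ↦ p a * mutualInfoAt μ Astar (Y a) b)
      (fun a _ ↦ mul_nonneg measureReal_nonneg (mutualInfoAt_nonneg (hY a) b)) (Finset.mem_univ b)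
  calc
    _ = (∑ a, gap a) ^ 2 := by rw [hregret]
    _ ≤ Fintype.card 𝒜 * ∑ a, gap a ^ 2 := sq_sum_le_card_mul_sum_sq
    _ ≤ Fintype.card 𝒜 * ∑ b, 2 * c * ∑ a, p a * mutualInfoAt μ Astar (Y a) b := by
      gcongr with b
      exact (hgap b).trans (by gcongr; exact hdiag b)
    _ = _ := by rw [hinfo, ← Finset.mul_sum]; ring

/-- **Proposition 3** (worst-case bound on the information ratio). If rewards
have range of width at most one, then under Thompson sampling
`(E[R(Y_{A*}) − R(Y_A)])² ≤ (|𝒜|/2) · I(A*; (A, Y_A))`. -/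
theorem information_ratio_le_card_div_two
    {Ω : Type*} [MeasurableSpace Ω] (μ : Measure Ω) [IsProbabilityMeasure μ]
    {𝒜 𝒴 : Type*} [Fintype 𝒜] [Nonempty 𝒜] [Fintype 𝒴] [Nonempty 𝒴]
    [MeasurableSpace 𝒜] [MeasurableSingletonClass 𝒜]
    [MeasurableSpace 𝒴] [MeasurableSingletonClass 𝒴]
    (Y : 𝒜 → Ω → 𝒴) (Astar A : Ω → 𝒜) (R : 𝒴 → ℝ)
    (hR : (⨆ y, R y) - (⨅ y, R y) ≤ 1)
    (hYmeas : ∀ a, Measurable (Y a)) (hAstarMeas : Measurable Astar)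
    (hAMeas : Measurable A)
    (hmatch : ∀ a : 𝒜, μ {ω | A ω = a} = μ {ω | Astar ω = a})
    (hindep : IndepFun A (fun ω => (Astar ω, fun a => Y a ω)) μ) :
    (∫ ω, (R (Y (Astar ω) ω) - R (Y (A ω) ω)) ∂μ) ^ 2 ≤
      ((Fintype.card 𝒜 : ℝ) / 2) *
        mutualInfo μ Astar (fun ω => (A ω, Y (A ω) ω)) := by
  have hproxy : (2 * ((‖(1 : ℝ)‖₊ / 2) ^ 2 : NNReal) : ℝ) = 1 / 2 := by norm_num
  have hindep_pair (a : 𝒜) : IndepFun A (fun ω ↦ (Astar ω, Y a ω)) μ :=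
    hindep.comp (ψ := fun z : 𝒜 × (𝒜 → 𝒴) ↦ (z.1, z.2 a)) measurable_id (by fun_prop)
  have hbound := information_ratio_le_card_div_two_general
    (fun a ↦ hasSubgaussianMGF_comp_sub_integral_of_iSup_sub_iInf_le (hYmeas a) hR)
    hYmeas hAstarMeas hAMeas hmatch hindep_pair
  rwa [hproxy, one_div_mul_eq_div] at hbound
end

section
/- Assume sup_{y∈𝒴} R(y) − inf_{y∈𝒴} R(y) ≤ 1, and assume full information: there is a finite set 𝒵 and a random variable Z : Ω → 𝒵 such that 𝒴 = 𝒜 × 𝒵 and Y_a = (a, Z) for every a ∈ 𝒜. Then ( E[R(Y_{A*}) − R(Y_A)] )² ≤ (1/2) · I(A*; (A, Y_A)), i.e. the information ratio of Thompson sampling is at most 1/2. -/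
open MeasureTheory ProbabilityTheory Real

/-!
Under full information the whole outcome vector `Y` can be recovered from the observed `Y_A`, so
by data processing `I(A*; Y) ≤ I(A*; (A, Y_A))`. The expected regret is the change in the mean of
`(a, y) ↦ R (y a)` when the joint law of `(A*, Y)` is replaced by the product of its marginals,
which is the law of `(A, Y)`. For rewards in an interval of length `w`, the Donsker–Varadhan
inequality and Hoeffding's lemma bound the square of such a change by `w² / 2` times the divergence
between the two laws, which is `I(A*; Y)`.
-/

open InformationTheory Function

section KullbackLeibler

variable {α : Type*} [MeasurableSpace α] {P Q : Measure α} {f : α → ℝ}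

lemma integral_sub_log_integral_exp_le_toReal_klDiv [IsProbabilityMeasure P]
    [IsProbabilityMeasure Q] (hPQ : klDiv P Q ≠ ⊤) (hfP : Integrable f P)
    (hfQ : Integrable (fun x ↦ exp (f x)) Q) :
    ∫ x, f x ∂P - log (∫ x, exp (f x) ∂Q) ≤ (klDiv P Q).toReal := by
  obtain ⟨hac, hllr⟩ := klDiv_ne_top_iff.1 hPQ
  have : IsProbabilityMeasure (Q.tilted f) := isProbabilityMeasure_tilted hfQ
  have gibbs := integral_llr_add_sub_measure_univ_nonneg
    (hac.trans (absolutelyContinuous_tilted hfQ)) (integrable_llr_tilted_right hac hfP hllr hfQ)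
  rw [integral_llr_tilted_right hac hfP hfQ hllr, probReal_univ, probReal_univ] at gibbs
  rw [toReal_klDiv_of_measure_eq hac (by simp)]
  linarith

lemma sq_integral_sub_integral_le_toReal_klDiv_of_hasSubgaussianMGF [IsProbabilityMeasure P]
    [IsProbabilityMeasure Q] {c : NNReal} (hPQ : klDiv P Q ≠ ⊤) (hfP : Integrable f P)
    (hf : HasSubgaussianMGF (fun x ↦ f x - ∫ y, f y ∂Q) c Q) :
    (∫ x, f x ∂P - ∫ x, f x ∂Q) ^ 2 ≤ 2 * c * (klDiv P Q).toReal := by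
  set m := ∫ x, f x ∂Q
  have hcenter : Integrable (fun x ↦ f x - m) P := hfP.sub (integrable_const m)
  have hmean : ∫ x, (f x - m) ∂P = ∫ x, f x ∂P - m := by
    simp [integral_sub hfP (integrable_const m)]
  have hquad (t : ℝ) :
      0 ≤ c / 2 * (t * t) + -(∫ x, f x ∂P - m) * t + (klDiv P Q).toReal := by
    have hvar := integral_sub_log_integral_exp_le_toReal_klDiv hPQ (hcenter.const_mul t)
      (hf.integrable_exp_mul t)
    have hlog : log (∫ x, exp (t * (f x - m)) ∂Q) ≤ c * t ^ 2 / 2 :=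
      (log_le_iff_le_exp (integral_exp_pos (hf.integrable_exp_mul t))).2 (hf.mgf_le t)
    rw [integral_const_mul, hmean] at hvar
    linarith
  have hdiscrim := discrim_le_zero hquad
  rw [discrim] at hdiscrim
  linarith

lemma sq_integral_sub_integral_le_toReal_klDiv_of_mem_Icc [IsProbabilityMeasure P]
    [IsProbabilityMeasure Q] {a b : ℝ} (hPQ : klDiv P Q ≠ ⊤) (hf : AEMeasurable f Q)
    (hab : ∀ᵐ x ∂Q, f x ∈ Set.Icc a b) :
    (∫ x, f x ∂P - ∫ x, f x ∂Q) ^ 2 ≤ (b - a) ^ 2 / 2 * (klDiv P Q).toReal := by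
  have hac : P ≪ Q := (klDiv_ne_top_iff.1 hPQ).1
  have hfP : Integrable f P := .of_mem_Icc a b (hf.mono_ac hac) (hac.ae_le hab)
  have h := sq_integral_sub_integral_le_toReal_klDiv_of_hasSubgaussianMGF hPQ hfP
    (hasSubgaussianMGF_of_mem_Icc hf hab)
  push_cast at h
  rw [div_pow, norm_eq_abs, sq_abs] at h
  linarith

lemma measureReal_singleton_eq_toReal_rnDeriv_mul [MeasurableSingletonClass α]
    [SigmaFinite P] [SigmaFinite Q] (hPQ : P ≪ Q) (x : α) :
    P.real {x} = (P.rnDeriv Q x).toReal * Q.real {x} := by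
  rw [measureReal_def, ← Measure.setLIntegral_rnDeriv hPQ, lintegral_singleton,
    ENNReal.toReal_mul, measureReal_def]

lemma toReal_klDiv_eq_sum [Fintype α] [MeasurableSingletonClass α] [IsFiniteMeasure P]
    [IsFiniteMeasure Q] (hPQ : P ≪ Q) :
    (klDiv P Q).toReal = ∑ x, P.real {x} * log (P.real {x} / Q.real {x}) +
      Q.real Set.univ - P.real Set.univ := by
  rw [toReal_klDiv hPQ .of_finite, integral_fintype .of_finite]
  congr 2
  refine Finset.sum_congr rfl fun x _ ↦ ?_
  have hdensity := measureReal_singleton_eq_toReal_rnDeriv_mul hPQ x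
  rcases eq_or_ne (Q.real {x}) 0 with hx | hx
  · simp [hdensity, hx]
  · rw [smul_eq_mul, llr, eq_div_of_mul_eq hx hdensity.symm]

end KullbackLeibler

lemma absolutelyContinuous_of_measure_singleton {α : Type*} [MeasurableSpace α] [Countable α]
    {P Q : Measure α} (h : ∀ x, Q {x} = 0 → P {x} = 0) : P ≪ Q := by
  intro s hs
  rw [← Set.biUnion_of_singleton s, measure_biUnion_null_iff s.to_countable]
  exact fun x hx ↦ h x (measure_mono_null (Set.singleton_subset_iff.2 hx) hs)

lemma absolutelyContinuous_fst_prod_snd {α β : Type*} [MeasurableSpace α] [MeasurableSpace β]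
    [Countable α] [Countable β] [MeasurableSingletonClass α] [MeasurableSingletonClass β]
    (ρ : Measure (α × β)) [SFinite ρ] : ρ ≪ ρ.fst.prod ρ.snd := by
  refine absolutelyContinuous_of_measure_singleton fun ⟨a, b⟩ h ↦ ?_
  rw [← Set.singleton_prod_singleton, Measure.prod_prod,
    Measure.fst_apply (measurableSet_singleton a),
    Measure.snd_apply (measurableSet_singleton b), mul_eq_zero] at h
  rcases h with h | h
  · exact measure_mono_null (by simp) h
  · exact measure_mono_null (by simp) h

lemma klDiv_map_prodMk_ne_top {Ω 𝒳 𝒵 : Type*} [MeasurableSpace Ω] {μ : Measure Ω}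
    [IsFiniteMeasure μ] [Finite 𝒳] [MeasurableSpace 𝒳] [MeasurableSingletonClass 𝒳]
    [Finite 𝒵] [MeasurableSpace 𝒵] [MeasurableSingletonClass 𝒵] {X : Ω → 𝒳} {Z : Ω → 𝒵}
    (hX : AEMeasurable X μ) (hZ : AEMeasurable Z μ) :
    klDiv (μ.map fun ω ↦ (X ω, Z ω)) ((μ.map X).prod (μ.map Z)) ≠ ⊤ := by
  have hac := absolutelyContinuous_fst_prod_snd (μ.map fun ω ↦ (X ω, Z ω))
  rw [Measure.fst_map_prodMk₀ hZ, Measure.snd_map_prodMk₀ hX] at hac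
  exact klDiv_ne_top hac .of_finite

section MutualInfo

variable {Ω 𝒳 𝒵 : Type*} [MeasurableSpace Ω] {μ : Measure Ω} [IsProbabilityMeasure μ]
  [Fintype 𝒳] [MeasurableSpace 𝒳] [MeasurableSingletonClass 𝒳]
  [Fintype 𝒵] [MeasurableSpace 𝒵] [MeasurableSingletonClass 𝒵]
  {X : Ω → 𝒳} {Z : Ω → 𝒵}

lemma mutualInfo_eq_toReal_klDiv (hX : AEMeasurable X μ) (hZ : AEMeasurable Z μ) :
    mutualInfo μ X Z =
      (klDiv (μ.map fun ω ↦ (X ω, Z ω)) ((μ.map X).prod (μ.map Z))).toReal := by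
  have := Measure.isProbabilityMeasure_map hX
  have := Measure.isProbabilityMeasure_map hZ
  have := Measure.isProbabilityMeasure_map (hX.prodMk hZ)
  have hjoint (x : 𝒳) (z : 𝒵) : (μ.map fun ω ↦ (X ω, Z ω)).real {(x, z)} =
      (μ {ω | X ω = x ∧ Z ω = z}).toReal := by
    rw [map_measureReal_apply_of_aemeasurable (hX.prodMk hZ) (measurableSet_singleton _)]
    simp [Measure.real, Set.preimage]
  have hprod (x : 𝒳) (z : 𝒵) : ((μ.map X).prod (μ.map Z)).real {(x, z)} =
      (μ {ω | X ω = x}).toReal * (μ {ω | Z ω = z}).toReal := by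
    rw [← Set.singleton_prod_singleton, measureReal_prod_prod,
      map_measureReal_apply_of_aemeasurable hX (measurableSet_singleton _),
      map_measureReal_apply_of_aemeasurable hZ (measurableSet_singleton _)]
    rfl
  rw [toReal_klDiv_eq_sum (klDiv_ne_top_iff.1 (klDiv_map_prodMk_ne_top hX hZ)).1,
    Fintype.sum_prod_type]
  simp only [hjoint, hprod, mutualInfo, probReal_univ, add_sub_cancel_right]

lemma mutualInfo_le_of_factorsThrough {𝒲 : Type*} [Fintype 𝒲] [MeasurableSpace 𝒲]
    [MeasurableSingletonClass 𝒲] {W : Ω → 𝒲} (hX : AEMeasurable X μ) (hZ : AEMeasurable Z μ)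
    (hW : W.FactorsThrough Z) : mutualInfo μ X W ≤ mutualInfo μ X Z := by
  have : Nonempty 𝒲 := (nonempty_of_isProbabilityMeasure μ).map W
  obtain ⟨g, rfl⟩ := (factorsThrough_iff W).1 hW
  have hg : Measurable g := measurable_of_finite g
  have hpair : Measurable (Prod.map id g : 𝒳 × 𝒵 → 𝒳 × 𝒲) := measurable_id.prodMap hg
  have := Measure.isProbabilityMeasure_map hX
  have := Measure.isProbabilityMeasure_map hZ
  have hjoint : (μ.map fun ω ↦ (X ω, Z ω)).map (Prod.map id g) =
      μ.map fun ω ↦ (X ω, (g ∘ Z) ω) :=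
    AEMeasurable.map_map_of_aemeasurable hpair.aemeasurable (hX.prodMk hZ)
  have hprod : ((μ.map X).prod (μ.map Z)).map (Prod.map id g) =
      (μ.map X).prod (μ.map (g ∘ Z)) := by
    rw [← Measure.map_prod_map _ _ measurable_id hg, Measure.map_id,
      AEMeasurable.map_map_of_aemeasurable hg.aemeasurable hZ]
  rw [mutualInfo_eq_toReal_klDiv hX hZ,
    mutualInfo_eq_toReal_klDiv hX (hg.comp_aemeasurable hZ), ← hjoint, ← hprod]
  exact ENNReal.toReal_mono (klDiv_map_prodMk_ne_top hX hZ) (klDiv_map_le _ _ hpair)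

lemma sq_integral_sub_integral_decoupled_le_mutualInfo {X' : Ω → 𝒳} (hX' : IdentDistrib X' X μ μ)
    (hZ : AEMeasurable Z μ) (hindep : IndepFun X' Z μ) {f : 𝒳 × 𝒵 → ℝ} {a b : ℝ}
    (hf : ∀ p, f p ∈ Set.Icc a b) :
    (∫ ω, f (X ω, Z ω) ∂μ - ∫ ω, f (X' ω, Z ω) ∂μ) ^ 2 ≤
      (b - a) ^ 2 / 2 * mutualInfo μ X Z := by
  have hX : AEMeasurable X μ := hX'.aemeasurable_snd
  have := Measure.isProbabilityMeasure_map hX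
  have := Measure.isProbabilityMeasure_map hZ
  have := Measure.isProbabilityMeasure_map (hX.prodMk hZ)
  have hfm : Measurable f := measurable_of_finite f
  have hlaw : μ.map (fun ω ↦ (X' ω, Z ω)) = (μ.map X).prod (μ.map Z) := by
    rw [hindep.map_prod_eq_prod_map_map hX'.aemeasurable_fst hZ, hX'.map_eq]
  rw [mutualInfo_eq_toReal_klDiv hX hZ,
    ← integral_map (hX.prodMk hZ) hfm.aestronglyMeasurable,
    ← integral_map (hX'.aemeasurable_fst.prodMk hZ) hfm.aestronglyMeasurable, hlaw]
  exact sq_integral_sub_integral_le_toReal_klDiv_of_mem_Icc (klDiv_map_prodMk_ne_top hX hZ)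
    hfm.aemeasurable (ae_of_all _ hf)

end MutualInfo

lemma identDistrib_of_measure_eq {Ω Ω' α : Type*} [MeasurableSpace Ω] [MeasurableSpace Ω']
    [MeasurableSpace α] [Countable α] [MeasurableSingletonClass α] {μ : Measure Ω}
    {ν : Measure Ω'} {X : Ω → α} {X' : Ω' → α} (hX : AEMeasurable X μ) (hX' : AEMeasurable X' ν)
    (h : ∀ a, μ {ω | X ω = a} = ν {ω | X' ω = a}) : IdentDistrib X X' μ ν where
  aemeasurable_fst := hX
  aemeasurable_snd := hX'
  map_eq := Measure.ext_of_singleton fun a ↦ by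
    rw [Measure.map_apply_of_aemeasurable hX (measurableSet_singleton a),
      Measure.map_apply_of_aemeasurable hX' (measurableSet_singleton a)]
    exact h a

lemma measurable_apply_of_countable_s4 {Ω 𝒜 𝒴 : Type*} [MeasurableSpace Ω] [Countable 𝒜]
    [MeasurableSpace 𝒜] [MeasurableSingletonClass 𝒜] [MeasurableSpace 𝒴] {A : Ω → 𝒜}
    {Y : 𝒜 → Ω → 𝒴} (hA : Measurable A) (hY : ∀ a, Measurable (Y a)) :
    Measurable fun ω ↦ Y (A ω) ω :=
  (measurable_from_prod_countable_right (f := fun p : 𝒜 × Ω ↦ Y p.1 p.2) hY).comp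
    (hA.prodMk measurable_id)

theorem information_ratio_le_half_of_full_information_general
    {Ω : Type*} [MeasurableSpace Ω] (μ : Measure Ω) [IsProbabilityMeasure μ]
    {𝒜 𝒴 : Type*} [Fintype 𝒜] [MeasurableSpace 𝒜] [MeasurableSingletonClass 𝒜]
    [Fintype 𝒴] [MeasurableSpace 𝒴] [MeasurableSingletonClass 𝒴]
    {Y : 𝒜 → Ω → 𝒴} {Astar A : Ω → 𝒜} {R : 𝒴 → ℝ} {w : ℝ}
    (hR : (⨆ y, R y) - (⨅ y, R y) ≤ w)
    (hfull : ∀ a b, (Y b).FactorsThrough (Y a))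
    (hYmeas : ∀ a, Measurable (Y a)) (hAstarMeas : Measurable Astar) (hAMeas : Measurable A)
    (hmatch : ∀ a : 𝒜, μ {ω | A ω = a} = μ {ω | Astar ω = a})
    (hindep : IndepFun A (fun ω a ↦ Y a ω) μ) :
    (∫ ω, (R (Y (Astar ω) ω) - R (Y (A ω) ω)) ∂μ) ^ 2 ≤
      w ^ 2 / 2 * mutualInfo μ Astar (fun ω ↦ (A ω, Y (A ω) ω)) := by
  classical
  have hvec : Measurable fun ω a ↦ Y a ω := measurable_pi_lambda _ hYmeas
  have hobs : Measurable fun ω ↦ (A ω, Y (A ω) ω) :=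
    hAMeas.prodMk (measurable_apply_of_countable_s4 hAMeas hYmeas)
  have hrecover : (fun ω a ↦ Y a ω).FactorsThrough (fun ω ↦ (A ω, Y (A ω) ω)) := by
    intro ω ω' h
    obtain ⟨hA, hY⟩ := Prod.mk.inj h
    exact funext fun b ↦ hfull (A ω) b (hY.trans (by rw [hA]))
  have hprocess := mutualInfo_le_of_factorsThrough (μ := μ) hAstarMeas.aemeasurable
    hobs.aemeasurable hrecover
  have hrange (y : 𝒴) : R y ∈ Set.Icc (⨅ y, R y) ((⨅ y, R y) + w) :=
    ⟨ciInf_le (Set.finite_range R).bddBelow y, by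
      linarith [le_ciSup (Set.finite_range R).bddAbove y]⟩
  have hint {B : Ω → 𝒜} (hB : Measurable B) : Integrable (fun ω ↦ R (Y (B ω) ω)) μ :=
    .of_mem_Icc _ _ ((measurable_of_finite R).comp
      (measurable_apply_of_countable_s4 hB hYmeas)).aemeasurable (ae_of_all _ fun ω ↦ hrange _)
  have hdecouple := sq_integral_sub_integral_decoupled_le_mutualInfo (μ := μ)
    (identDistrib_of_measure_eq hAMeas.aemeasurable hAstarMeas.aemeasurable hmatch)
    hvec.aemeasurable hindep (f := fun p ↦ R (p.2 p.1)) fun p ↦ hrange _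
  rw [add_sub_cancel_left] at hdecouple
  rw [integral_sub (hint hAstarMeas) (hint hAMeas)]
  exact hdecouple.trans (by gcongr)

/-- **Proposition 4** (information ratio under full information). If rewards
have range of width at most one and the outcome space is `𝒴 = 𝒜 × 𝒵` with
`Y_a = (a, Z)` for a single random variable `Z` (so any selected action fully
reveals the outcome of every other action), then under Thompson sampling
`(E[R(Y_{A*}) − R(Y_A)])² ≤ (1/2) · I(A*; (A, Y_A))`. -/
theorem information_ratio_le_half_of_full_information
    {Ω : Type*} [MeasurableSpace Ω] (μ : Measure Ω) [IsProbabilityMeasure μ]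
    {𝒜 𝒵 : Type*} [Fintype 𝒜] [Nonempty 𝒜] [Fintype 𝒵] [Nonempty 𝒵]
    [MeasurableSpace 𝒜] [MeasurableSingletonClass 𝒜]
    [MeasurableSpace 𝒵] [MeasurableSingletonClass 𝒵]
    (Y : 𝒜 → Ω → 𝒜 × 𝒵) (Astar A : Ω → 𝒜) (Z : Ω → 𝒵) (R : 𝒜 × 𝒵 → ℝ)
    (hR : (⨆ y, R y) - (⨅ y, R y) ≤ 1)
    (hfull : ∀ a ω, Y a ω = (a, Z ω))
    (hYmeas : ∀ a, Measurable (Y a)) (hAstarMeas : Measurable Astar)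
    (hAMeas : Measurable A)
    (hmatch : ∀ a : 𝒜, μ {ω | A ω = a} = μ {ω | Astar ω = a})
    (hindep : IndepFun A (fun ω => (Astar ω, fun a => Y a ω)) μ) :
    (∫ ω, (R (Y (Astar ω) ω) - R (Y (A ω) ω)) ∂μ) ^ 2 ≤
      (1 / 2 : ℝ) * mutualInfo μ Astar (fun ω => (A ω, Y (A ω) ω)) := by
  simpa using information_ratio_le_half_of_full_information_general μ hR
    (fun a b ω ω' h ↦ by simp_all) hYmeas hAstarMeas hAMeas hmatch
    (hindep.comp measurable_id measurable_snd)
end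

section
/- Fix σ ≥ 0 and assume that for each a ∈ 𝒜, the centered reward R(Y_a) − E[R(Y_a)] is σ-sub-Gaussian, i.e. E[exp(λ (R(Y_a) − E[R(Y_a)]))] ≤ exp(λ² σ² / 2) for all λ ∈ ℝ. Then ( E[R(Y_{A*}) − R(Y_A)] )² ≤ 2 |𝒜| σ² · I(A*; (A, Y_A)). -/
open MeasureTheory ProbabilityTheory Real

/-!
Split the expected regret over the optimal action: as `A` is independent of `(A*, Y)` and has the
law of `A*`, it equals `∑ a, D a` with `D a = E[(R(Y_a) − E[R(Y_a)]); A* = a]`. Independence also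
gives `I(A*; (A, Y_A)) = ∑ a, P(A = a) I(A*; Y_a)`. By Donsker–Varadhan, the information `K a` that
the event `A* = a` carries about `Y_a` satisfies `l * D a − P(A* = a) l² σ² / 2 ≤ K a` for every
`l`, and the discriminant of this quadratic yields `(D a)² ≤ 2 σ² P(A* = a) K a`. Since
`K a ≤ I(A*; Y_a)`, the Cauchy–Schwarz inequality over the actions concludes.
-/

section Gibbs

lemma sub_le_mul_log_div {a b : ℝ} (ha : 0 ≤ a) (hb : 0 ≤ b) (hab : b = 0 → a = 0) :
    a - b ≤ a * log (a / b) := by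
  rcases ha.eq_or_lt with rfl | ha
  · simpa using hb
  have hb : 0 < b := hb.lt_of_ne fun h => ha.ne' (hab h.symm)
  calc a - b = a * (1 - (a / b)⁻¹) := by field_simp
    _ ≤ a * log (a / b) := by gcongr; exact one_sub_inv_le_log_of_pos (by positivity)

variable {ι : Type*} [Fintype ι] {q r f : ι → ℝ} {c : ℝ}

/-- The Donsker–Varadhan bound for unnormalised weights, from Gibbs' inequality against the tilted
weights `(∑ j, q j) * r i * exp (f i - c)`, whose total mass is at most that of `q`. -/
lemma sum_mul_le_sum_mul_log_div_add (hq : ∀ i, 0 ≤ q i) (hr : ∀ i, 0 ≤ r i)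
    (hqr : ∀ i, r i = 0 → q i = 0) (hf : ∑ i, r i * exp (f i) ≤ exp c) :
    ∑ i, q i * f i ≤ ∑ i, q i * log (q i / ((∑ j, q j) * r i)) + (∑ i, q i) * c := by
  set p := ∑ i, q i
  have hp : 0 ≤ p := Finset.sum_nonneg fun i _ => hq i
  have hpq (i : ι) (h : p = 0) : q i = 0 :=
    (Finset.sum_eq_zero_iff_of_nonneg fun i _ => hq i).1 h i (Finset.mem_univ i)
  have tilted_mass : ∑ i, p * r i * exp (f i - c) ≤ p :=
    calc ∑ i, p * r i * exp (f i - c) = p * exp (-c) * ∑ i, r i * exp (f i) := by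
          rw [Finset.mul_sum]
          exact Finset.sum_congr rfl fun i _ => by rw [sub_eq_add_neg, exp_add]; ring
      _ ≤ p * exp (-c) * exp c := by gcongr
      _ = p := by rw [mul_assoc, ← exp_add, neg_add_cancel, exp_zero, mul_one]
  have gibbs (i : ι) : q i - p * r i * exp (f i - c) ≤
      q i * log (q i / (p * r i)) - q i * f i + q i * c := by
    have hac : p * r i * exp (f i - c) = 0 → q i = 0 := by
      simpa [or_imp] using ⟨hpq i, hqr i⟩
    refine (sub_le_mul_log_div (hq i) (by have := hr i; positivity) hac).trans_eq ?_
    by_cases hqi : q i = 0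
    · simp [hqi]
    have hpr : p * r i ≠ 0 := mul_ne_zero (mt (hpq i) hqi) (mt (hqr i) hqi)
    rw [← div_div, log_div (div_ne_zero hqi hpr) (exp_ne_zero _), log_exp]
    ring
  have hsum := Finset.sum_le_sum fun i (_ : i ∈ Finset.univ) => gibbs i
  simp only [Finset.sum_add_distrib, Finset.sum_sub_distrib, ← Finset.sum_mul] at hsum
  linarith

end Gibbs

section FiniteRange

variable {Ω 𝒵 : Type*} [MeasurableSpace Ω] [Fintype 𝒵] [MeasurableSpace 𝒵]
  [MeasurableSingletonClass 𝒵] {μ : Measure Ω} [IsFiniteMeasure μ] {Z : Ω → 𝒵}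

lemma setIntegral_comp_eq_sum (hZ : Measurable Z) (E : Set Ω) (g : 𝒵 → ℝ) :
    ∫ ω in E, g (Z ω) ∂μ = ∑ z, μ.real (E ∩ Z ⁻¹' {z}) * g z := by
  rw [← integral_map hZ.aemeasurable (measurable_of_finite g).aestronglyMeasurable,
    integral_fintype .of_finite]
  refine Finset.sum_congr rfl fun z _ => ?_
  rw [map_measureReal_apply hZ (measurableSet_singleton z),
    measureReal_restrict_apply (hZ (measurableSet_singleton z)), Set.inter_comm, smul_eq_mul]

lemma sum_measureReal_inter_preimage_singleton (hZ : Measurable Z) (E : Set Ω) :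
    ∑ z, μ.real (E ∩ Z ⁻¹' {z}) = μ.real E := by
  simpa using (setIntegral_comp_eq_sum (μ := μ) hZ E fun _ => 1).symm

end FiniteRange

section EventInfo

variable {Ω 𝒳 𝒵 : Type*} [MeasurableSpace Ω] [Fintype 𝒳] [Fintype 𝒵]

/-- The information `μ(E) * KL(law of Z given E ‖ law of Z)` that the event `E` carries about a
finitely-valued random variable `Z`. The factor `μ(E)` is kept inside, so that null events need no
separate treatment and `mutualInfo μ X Z` is the sum over the events `X = x`. -/
noncomputable def eventInfo (μ : Measure Ω) (E : Set Ω) (Z : Ω → 𝒵) : ℝ :=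
  ∑ z, μ.real (E ∩ Z ⁻¹' {z}) *
    log (μ.real (E ∩ Z ⁻¹' {z}) / (μ.real E * μ.real (Z ⁻¹' {z})))

lemma mutualInfo_eq_sum_eventInfo (μ : Measure Ω) (X : Ω → 𝒳) (Z : Ω → 𝒵) :
    mutualInfo μ X Z = ∑ x, eventInfo μ (X ⁻¹' {x}) Z :=
  rfl

variable [MeasurableSpace 𝒵] [MeasurableSingletonClass 𝒵] {μ : Measure Ω} {Z : Ω → 𝒵}

lemma setIntegral_le_eventInfo_add [IsFiniteMeasure μ] (hZ : Measurable Z) (E : Set Ω)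
    {g : 𝒵 → ℝ} {c : ℝ} (hg : ∫ ω, exp (g (Z ω)) ∂μ ≤ exp c) :
    ∫ ω in E, g (Z ω) ∂μ ≤ eventInfo μ E Z + μ.real E * c := by
  have hexp : ∑ z, μ.real (Z ⁻¹' {z}) * exp (g z) ≤ exp c := by
    rw [← setIntegral_univ, setIntegral_comp_eq_sum hZ _ fun z => exp (g z)] at hg
    simpa only [Set.univ_inter] using hg
  have hac (z : 𝒵) (h : μ.real (Z ⁻¹' {z}) = 0) : μ.real (E ∩ Z ⁻¹' {z}) = 0 :=
    measureReal_mono_null Set.inter_subset_right h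
  have h := sum_mul_le_sum_mul_log_div_add (fun _ => measureReal_nonneg)
    (fun _ => measureReal_nonneg) hac hexp
  rwa [sum_measureReal_inter_preimage_singleton hZ, ← setIntegral_comp_eq_sum hZ] at h

lemma eventInfo_nonneg [IsProbabilityMeasure μ] (hZ : Measurable Z) (E : Set Ω) :
    0 ≤ eventInfo μ E Z := by
  simpa using setIntegral_le_eventInfo_add (μ := μ) hZ E (g := 0) (c := 0) (by simp)

lemma mutualInfo_nonneg [IsProbabilityMeasure μ] (hZ : Measurable Z) (X : Ω → 𝒳) :
    0 ≤ mutualInfo μ X Z :=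
  Finset.sum_nonneg fun x _ => eventInfo_nonneg hZ (X ⁻¹' {x})

lemma eventInfo_le_mutualInfo [IsProbabilityMeasure μ] (hZ : Measurable Z) (X : Ω → 𝒳) (x : 𝒳) :
    eventInfo μ (X ⁻¹' {x}) Z ≤ mutualInfo μ X Z :=
  Finset.single_le_sum (f := fun x => eventInfo μ (X ⁻¹' {x}) Z)
    (fun x _ => eventInfo_nonneg hZ (X ⁻¹' {x})) (Finset.mem_univ x)

lemma sq_setIntegral_le_of_mgf_le [IsFiniteMeasure μ] (hZ : Measurable Z) (E : Set Ω)
    {g : 𝒵 → ℝ} {σ : ℝ} (hg : ∀ l, mgf (fun ω => g (Z ω)) μ l ≤ exp (l ^ 2 * σ ^ 2 / 2)) :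
    (∫ ω in E, g (Z ω) ∂μ) ^ 2 ≤ 2 * σ ^ 2 * (μ.real E * eventInfo μ E Z) := by
  have nonneg_quadratic (l : ℝ) : 0 ≤ μ.real E * σ ^ 2 / 2 * (l * l) +
      -(∫ ω in E, g (Z ω) ∂μ) * l + eventInfo μ E Z := by
    have h := setIntegral_le_eventInfo_add hZ E (g := fun z => l * g z) (hg l)
    rw [integral_const_mul] at h
    linarith
  have := discrim_le_zero nonneg_quadratic
  rw [discrim] at this
  linarith

end EventInfo

section RandomIndex

variable {Ω ι : Type*} [MeasurableSpace Ω] [MeasurableSpace ι] [MeasurableSingletonClass ι]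
  {μ : Measure Ω}

section Integral

variable {F : Type*} [NormedAddCommGroup F] {B : Ω → ι} {W : ι → Ω → F}

lemma integrableOn_randomIndex (hB : Measurable B) {i : ι} (hW : IntegrableOn (W i) (B ⁻¹' {i}) μ) :
    IntegrableOn (fun ω => W (B ω) ω) (B ⁻¹' {i}) μ :=
  hW.congr_fun (fun ω (hω : B ω = i) => by simp only [hω]) (hB (measurableSet_singleton i))

lemma integrable_randomIndex [Finite ι] (hB : Measurable B)
    (hW : ∀ i, IntegrableOn (W i) (B ⁻¹' {i}) μ) : Integrable (fun ω => W (B ω) ω) μ := by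
  have cover : ⋃ i, B ⁻¹' {i} = Set.univ := Set.iUnion_eq_univ_iff.2 fun ω => ⟨B ω, rfl⟩
  rw [← integrableOn_univ, ← cover, integrableOn_finite_iUnion]
  exact fun i => integrableOn_randomIndex hB (hW i)

lemma integral_randomIndex [Fintype ι] [NormedSpace ℝ F] (hB : Measurable B)
    (hW : ∀ i, IntegrableOn (W i) (B ⁻¹' {i}) μ) :
    ∫ ω, W (B ω) ω ∂μ = ∑ i, ∫ ω in B ⁻¹' {i}, W i ω ∂μ := by
  have cover : ⋃ i, B ⁻¹' {i} = Set.univ := Set.iUnion_eq_univ_iff.2 fun ω => ⟨B ω, rfl⟩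
  rw [← setIntegral_univ, ← cover,
    integral_iUnion_fintype (fun i => hB (measurableSet_singleton i))
      (pairwise_disjoint_fiber B) (fun i => integrableOn_randomIndex hB (hW i))]
  exact Finset.sum_congr rfl fun i _ => setIntegral_congr_fun (hB (measurableSet_singleton i))
    fun ω (hω : B ω = i) => by simp only [hω]

end Integral

variable [Fintype ι]

lemma integral_randomIndex_sub_randomIndex_eq_sum [IsFiniteMeasure μ] {A B : Ω → ι} {W : ι → Ω → ℝ}
    (hA : Measurable A) (hB : Measurable B) (hW : ∀ i, Integrable (W i) μ)
    (hlaw : ∀ i, μ (A ⁻¹' {i}) = μ (B ⁻¹' {i})) (hindep : ∀ i, IndepFun A (W i) μ) :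
    ∫ ω, (W (B ω) ω - W (A ω) ω) ∂μ =
      ∑ i, ∫ ω in B ⁻¹' {i}, (W i ω - ∫ ω', W i ω' ∂μ) ∂μ := by
  rw [integral_sub (integrable_randomIndex hB fun i => (hW i).integrableOn)
      (integrable_randomIndex hA fun i => (hW i).integrableOn),
    integral_randomIndex hB fun i => (hW i).integrableOn,
    integral_randomIndex hA fun i => (hW i).integrableOn, ← Finset.sum_sub_distrib]
  refine Finset.sum_congr rfl fun i _ => ?_
  have hAi : ∫ ω in A ⁻¹' {i}, W i ω ∂μ = μ.real (B ⁻¹' {i}) * ∫ ω, W i ω ∂μ := by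
    rw [measureReal_def, ← hlaw i]
    exact Indep.setIntegral_eq_mul (f := id) hA.comap_le (hindep i) (hW i).aemeasurable
      ⟨{i}, measurableSet_singleton i, rfl⟩ measurable_id.aestronglyMeasurable
  rw [hAi, integral_sub (hW i).integrableOn (integrable_const _), setIntegral_const, smul_eq_mul]

variable {𝒳 𝒴 : Type*} [Fintype 𝒳] [Fintype 𝒴] [MeasurableSpace 𝒳] [MeasurableSingletonClass 𝒳]
  [MeasurableSpace 𝒴] [MeasurableSingletonClass 𝒴]

lemma mutualInfo_randomIndex {X : Ω → 𝒳} {A : Ω → ι} {Y : ι → Ω → 𝒴}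
    (hindep : ∀ i, IndepFun A (fun ω => (X ω, Y i ω)) μ) :
    mutualInfo μ X (fun ω => (A ω, Y (A ω) ω)) =
      ∑ i, μ.real (A ⁻¹' {i}) * mutualInfo μ X (Y i) := by
  have pair_preimage (i : ι) (y : 𝒴) :
      (fun ω => (A ω, Y (A ω) ω)) ⁻¹' {(i, y)} = A ⁻¹' {i} ∩ Y i ⁻¹' {y} := by
    ext ω
    simp +contextual [and_congr_right_iff]
  have joint (i : ι) (x : 𝒳) (y : 𝒴) :
      μ.real (X ⁻¹' {x} ∩ (fun ω => (A ω, Y (A ω) ω)) ⁻¹' {(i, y)}) =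
        μ.real (A ⁻¹' {i}) * μ.real (X ⁻¹' {x} ∩ Y i ⁻¹' {y}) := by
    rw [pair_preimage, Set.inter_left_comm]
    have h := (hindep i).measure_inter_preimage_eq_mul {i} ({x} ×ˢ {y})
      (measurableSet_singleton i) ((measurableSet_singleton x).prod (measurableSet_singleton y))
    rw [Set.mk_preimage_prod] at h
    simpa only [measureReal_def, ENNReal.toReal_mul] using congrArg ENNReal.toReal h
  have marginal (i : ι) (y : 𝒴) :
      μ.real ((fun ω => (A ω, Y (A ω) ω)) ⁻¹' {(i, y)}) =
        μ.real (A ⁻¹' {i}) * μ.real (Y i ⁻¹' {y}) := by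
    rw [pair_preimage]
    have hAY : IndepFun A (Y i) μ := (hindep i).comp measurable_id measurable_snd
    simpa only [measureReal_def, ENNReal.toReal_mul] using congrArg ENNReal.toReal
      (hAY.measure_inter_preimage_eq_mul {i} {y} (measurableSet_singleton i)
        (measurableSet_singleton y))
  simp only [mutualInfo_eq_sum_eventInfo, eventInfo, Fintype.sum_prod_type, joint, marginal,
    Finset.mul_sum]
  rw [Finset.sum_comm]
  refine Finset.sum_congr rfl fun i _ => Finset.sum_congr rfl fun x _ =>
    Finset.sum_congr rfl fun y _ => ?_
  by_cases hi : μ.real (A ⁻¹' {i}) = 0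
  · simp [hi]
  · rw [mul_left_comm (μ.real (X ⁻¹' {x})), mul_div_mul_left _ _ hi, mul_assoc]

end RandomIndex

theorem information_ratio_le_subGaussian_worst_case_general
    {Ω : Type*} [MeasurableSpace Ω] (μ : Measure Ω) [IsProbabilityMeasure μ]
    {𝒜 𝒴 : Type*} [Fintype 𝒜] [Fintype 𝒴]
    [MeasurableSpace 𝒜] [MeasurableSingletonClass 𝒜]
    [MeasurableSpace 𝒴] [MeasurableSingletonClass 𝒴]
    (Y : 𝒜 → Ω → 𝒴) (Astar A : Ω → 𝒜) (R : 𝒴 → ℝ) (σ : 𝒜 → ℝ)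
    (hsub : ∀ (a : 𝒜) (l : ℝ),
      ∫ ω, exp (l * (R (Y a ω) - ∫ ω', R (Y a ω') ∂μ)) ∂μ ≤ exp (l ^ 2 * σ a ^ 2 / 2))
    (hYmeas : ∀ a, Measurable (Y a)) (hAstarMeas : Measurable Astar) (hAMeas : Measurable A)
    (hmatch : ∀ a : 𝒜, μ {ω | A ω = a} = μ {ω | Astar ω = a})
    (hindep : ∀ a, IndepFun A (fun ω => (Astar ω, Y a ω)) μ) :
    (∫ ω, (R (Y (Astar ω) ω) - R (Y (A ω) ω)) ∂μ) ^ 2 ≤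
      2 * (∑ a, σ a ^ 2) * mutualInfo μ Astar (fun ω => (A ω, Y (A ω) ω)) := by
  have hR : Measurable R := measurable_of_finite R
  have hW (a : 𝒜) : Integrable (fun ω => R (Y a ω)) μ :=
    Integrable.of_finite.comp_measurable (hYmeas a)
  have hAW (a : 𝒜) : IndepFun A (fun ω => R (Y a ω)) μ :=
    (hindep a).comp measurable_id (hR.comp measurable_snd)
  have hlaw (a : 𝒜) : μ.real (A ⁻¹' {a}) = μ.real (Astar ⁻¹' {a}) :=
    congrArg ENNReal.toReal (hmatch a)
  have transport (a : 𝒜) :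
      (∫ ω in Astar ⁻¹' {a}, (R (Y a ω) - ∫ ω', R (Y a ω') ∂μ) ∂μ) ^ 2 ≤
        2 * σ a ^ 2 * (μ.real (A ⁻¹' {a}) * mutualInfo μ Astar (Y a)) :=
    calc (∫ ω in Astar ⁻¹' {a}, (R (Y a ω) - ∫ ω', R (Y a ω') ∂μ) ∂μ) ^ 2
      _ ≤ 2 * σ a ^ 2 * (μ.real (A ⁻¹' {a}) * eventInfo μ (Astar ⁻¹' {a}) (Y a)) := by
        rw [hlaw]
        exact sq_setIntegral_le_of_mgf_le (hYmeas a) _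
          (g := fun y => R y - ∫ ω', R (Y a ω') ∂μ) (hsub a)
      _ ≤ 2 * σ a ^ 2 * (μ.real (A ⁻¹' {a}) * mutualInfo μ Astar (Y a)) := by
        gcongr
        exact eventInfo_le_mutualInfo (hYmeas a) Astar a
  rw [integral_randomIndex_sub_randomIndex_eq_sum (W := fun a ω => R (Y a ω)) hAMeas
    hAstarMeas hW hmatch hAW, mutualInfo_randomIndex hindep, Finset.mul_sum Finset.univ _ (2 : ℝ)]
  exact Finset.sum_sq_le_sum_mul_sum_of_sq_le_mul _ (fun a _ => by positivity)
    (fun a _ => mul_nonneg measureReal_nonneg (mutualInfo_nonneg (hYmeas a) Astar))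
    fun a _ => transport a

/-- **Corollary 1, worst case** (sub-Gaussian analogue of Proposition 3). If
for each action the centered reward is `σ`-sub-Gaussian, then under Thompson
sampling `(E[R(Y_{A*}) − R(Y_A)])² ≤ 2 |𝒜| σ² · I(A*; (A, Y_A))`. -/
theorem information_ratio_le_subGaussian_worst_case
    {Ω : Type*} [MeasurableSpace Ω] (μ : Measure Ω) [IsProbabilityMeasure μ]
    {𝒜 𝒴 : Type*} [Fintype 𝒜] [Nonempty 𝒜] [Fintype 𝒴] [Nonempty 𝒴]
    [MeasurableSpace 𝒜] [MeasurableSingletonClass 𝒜]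
    [MeasurableSpace 𝒴] [MeasurableSingletonClass 𝒴]
    (Y : 𝒜 → Ω → 𝒴) (Astar A : Ω → 𝒜) (R : 𝒴 → ℝ)
    (σ : ℝ) (hσ : 0 ≤ σ)
    (hsub : ∀ (a : 𝒜) (l : ℝ),
      ∫ ω, Real.exp (l * (R (Y a ω) - ∫ ω', R (Y a ω') ∂μ)) ∂μ ≤
        Real.exp (l ^ 2 * σ ^ 2 / 2))
    (hYmeas : ∀ a, Measurable (Y a)) (hAstarMeas : Measurable Astar)
    (hAMeas : Measurable A)
    (hmatch : ∀ a : 𝒜, μ {ω | A ω = a} = μ {ω | Astar ω = a})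
    (hindep : IndepFun A (fun ω => (Astar ω, fun a => Y a ω)) μ) :
    (∫ ω, (R (Y (Astar ω) ω) - R (Y (A ω) ω)) ∂μ) ^ 2 ≤
      2 * (Fintype.card 𝒜 : ℝ) * σ ^ 2 *
        mutualInfo μ Astar (fun ω => (A ω, Y (A ω) ω)) := by
  simpa [mul_assoc] using information_ratio_le_subGaussian_worst_case_general μ Y Astar A R
    (fun _ => σ) hsub hYmeas hAstarMeas hAMeas hmatch fun a => hindep.comp measurable_id
      (measurable_fst.prodMk ((measurable_pi_apply a).comp measurable_snd))
end
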